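/- (Kernel of the supersymmetrization map.) Let n, p ≥ 1. Let ρ : ℤ[c_1, c_2, c_3, …] → ℤ[x_1,…,x_n,y_1,…,y_p] be the ring homomorphism from the polynomial ring in countably many variables c_1, c_2, … determined by ρ(c_d) = ∑_{a=0}^{d} (−1)^a h_a(x_1,…,x_n) e_{d−a}(y_1,…,y_p) for each d ≥ 1. For a partition λ, let S_λ := det[ c_{(λ~)_k − k + l} ]_{1≤k,l≤λ_1} ∈ ℤ[c_1, c_2, …] (with the convention c_0 = 1 and c_d = 0 for d < 0). Then the kernel of ρ equals the ℤ-submodule spanned by the set { S_λ : λ a partition with λ_l ≥ n+1 for all 1 ≤ l ≤ p+1 }. -/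

import Mathlib

/-!
STATEMENT 5 (kernel of the supersymmetrization map):
the kernel of the ring homomorphism `ρ : ℤ[c_1,c_2,…] → ℤ[x_1,…,x_n,y_1,…,y_p]`,
`ρ(c_d) = ∑_{a=0}^d (−1)^a h_a(x) e_{d−a}(y)`, equals the ℤ-submodule spanned by the
abstract Schur polynomials `S_λ = det[ c_{(λ~)_k − k + l} ]_{1≤k,l≤λ_1}` for partitions
`λ` containing the block `((n+1)^{p+1})`.
The variable `X d` of `MvPolynomial ℕ ℤ` stands for `c_{d+1}`; partitions are encoded
0-based as functions `ℕ → ℕ`.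
-/

open Finset MvPolynomial

/-- The conjugate partition, 0-based: `conjP lam m = (λ~)_{m+1} = #{k : λ_k ≥ m+1}`. -/
noncomputable def conjP (lam : ℕ → ℕ) (m : ℕ) : ℕ := Nat.card {k : ℕ // m + 1 ≤ lam k}

/-- The complete homogeneous symmetric polynomial `h_a(x_1,…,x_n)` in the x-variables. -/
noncomputable def hsymX (n p a : ℕ) : MvPolynomial (Fin n ⊕ Fin p) ℤ :=
  ∑ f ∈ Finset.Nat.antidiagonalTuple n a, ∏ k, X (Sum.inl k) ^ f k

/-- The elementary symmetric polynomial `e_b(y_1,…,y_p)` in the y-variables. -/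
noncomputable def esymY (n p b : ℕ) : MvPolynomial (Fin n ⊕ Fin p) ℤ :=
  ∑ t ∈ Finset.powersetCard b (Finset.univ : Finset (Fin p)), ∏ i ∈ t, X (Sum.inr i)

/-- `c_d = ∑_{a=0}^{d} (−1)^a h_a(x) e_{d−a}(y)`, the Chern class of `B^p − A^n`. -/
noncomputable def cpoly (n p d : ℕ) : MvPolynomial (Fin n ⊕ Fin p) ℤ :=
  ∑ a ∈ Finset.range (d + 1), (-1) ^ a * hsymX n p a * esymY n p (d - a)

/-- The variable `c_d ∈ ℤ[c_1,c_2,…]` for integer `d`, with the conventions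
`c_0 = 1` and `c_d = 0` for `d < 0`.  (`X e` encodes `c_{e+1}`.) -/
noncomputable def cvar (d : ℤ) : MvPolynomial ℕ ℤ :=
  if d < 0 then 0 else if d = 0 then 1 else X (d.toNat - 1)

/-- The abstract Schur polynomial
`S_λ = det[ c_{(λ~)_k − k + l} ]_{1≤k,l≤λ_1}` in `ℤ[c_1,c_2,…]` (indices 0-based). -/
noncomputable def SchurC (lam : ℕ → ℕ) : MvPolynomial ℕ ℤ :=
  (Matrix.of fun k l : Fin (lam 0) =>
    cvar ((conjP lam (k : ℕ) : ℤ) - (k : ℕ) + (l : ℕ))).det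

/-! ### Helper material -/

/-- partitions as functions -/
def IsPart (mu : ℕ → ℕ) : Prop := Antitone mu ∧ ∃ N, ∀ k, N ≤ k → mu k = 0

theorem conjP_lt {lam : ℕ → ℕ} (h : IsPart lam) (k m : ℕ) : k < conjP lam m ↔ m < lam k := by
  obtain ⟨ha, N, hN⟩ := h
  have hex : ∃ k, lam k ≤ m := ⟨N, by simp [hN N le_rfl]⟩
  classical
  have key : ∀ k, m + 1 ≤ lam k ↔ k < Nat.find hex := by
    intro k
    rw [Nat.lt_find_iff]
    constructor
    · intro h j hj
      have := ha hj
      omega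
    · intro h
      have := h k le_rfl
      omega
  have : conjP lam m = Nat.find hex := by
    unfold conjP
    have : {k : ℕ // m + 1 ≤ lam k} = {k : ℕ // k < Nat.find hex} := by
      congr 1
      funext k
      exact propext (key k)
    rw [this]
    have h2 : Nat.card {k : ℕ // k < Nat.find hex} = Nat.card (Fin (Nat.find hex)) :=
      Nat.card_congr Fin.equivSubtype.symm
    rw [h2, Nat.card_fin]
  rw [this, ← key]
  exact Nat.succ_le_iff

theorem conjP_isPart {lam : ℕ → ℕ} (h : IsPart lam) : IsPart (conjP lam) := by
  constructor
  · intro a b hab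
    by_contra hlt
    push Not at hlt
    have h1 := (conjP_lt h _ _).1 hlt
    have h2 : ¬ (a < lam (conjP lam a)) := by
      rw [← conjP_lt h]; exact lt_irrefl _
    omega
  · refine ⟨lam 0, fun k hk => ?_⟩
    by_contra hne
    have := (conjP_lt h 0 k).1 (Nat.pos_of_ne_zero hne)
    omega

theorem conjP_conjP {lam : ℕ → ℕ} (h : IsPart lam) : conjP (conjP lam) = lam := by
  funext k
  apply eq_of_forall_lt_iff
  intro m
  rw [conjP_lt (conjP_isPart h), conjP_lt h]

/-- coefficient with integer index -/
noncomputable def cz {R : Type*} [CommRing R] (C : PowerSeries R) (d : ℤ) : R :=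
  if d < 0 then 0 else PowerSeries.coeff d.toNat C

noncomputable def DD {R : Type*} [CommRing R] (C : PowerSeries R) (m : ℕ) (mu : ℕ → ℕ) : R :=
  (Matrix.of fun k l : Fin m => cz C ((mu (k : ℕ) : ℤ) - (k : ℕ) + (l : ℕ))).det

theorem cz_neg {R : Type*} [CommRing R] (C : PowerSeries R) {d : ℤ} (h : d < 0) : cz C d = 0 :=
  if_pos h

theorem cz_nat {R : Type*} [CommRing R] (C : PowerSeries R) (d : ℕ) :
    cz C (d : ℤ) = PowerSeries.coeff d C := by
  simp [cz]

theorem cz_map {R S : Type*} [CommRing R] [CommRing S] (f : R →+* S) (C : PowerSeries R) (d : ℤ) :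
    cz (PowerSeries.map f C) d = f (cz C d) := by
  unfold cz
  split_ifs <;> simp

theorem DD_map {R S : Type*} [CommRing R] [CommRing S] (f : R →+* S) (C : PowerSeries R)
    (m : ℕ) (mu : ℕ → ℕ) : DD (PowerSeries.map f C) m mu = f (DD C m mu) := by
  unfold DD
  rw [RingHom.map_det]
  congr 1
  ext i j
  simp [cz_map]

theorem cz_mul {R : Type*} [CommRing R] (C : PowerSeries R) (y : R) (d : ℤ) :
    cz (C * (1 + PowerSeries.C y * PowerSeries.X)) d = cz C d + y * cz C (d - 1) := by
  rcases lt_or_ge d 0 with h | h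
  · rw [cz_neg _ h, cz_neg _ h, cz_neg _ (by omega)]; simp
  · lift d to ℕ using h
    rw [cz_nat, cz_nat]
    have e : C * (1 + PowerSeries.C y * PowerSeries.X)
        = C + PowerSeries.C y * (C * PowerSeries.X) := by ring
    rw [e, map_add, PowerSeries.coeff_C_mul]
    cases d with
    | zero => rw [cz_neg _ (by omega)]; simp
    | succ d =>
      rw [PowerSeries.coeff_succ_mul_X]
      have : ((d + 1 : ℕ) : ℤ) - 1 = (d : ℕ) := by push_cast; ring
      rw [this, cz_nat]

theorem DD_succ {R : Type*} [CommRing R] (C : PowerSeries R) (hC : PowerSeries.coeff 0 C = 1)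
    (m : ℕ) (mu : ℕ → ℕ) (h : mu m = 0) : DD C (m + 1) mu = DD C m mu := by
  unfold DD
  rw [Matrix.det_succ_row _ (Fin.last m), Finset.sum_eq_single (Fin.last m)]
  · have h0 := cz_nat C 0
    simp only [Nat.cast_zero, hC] at h0
    simp only [Matrix.of_apply, Fin.val_last, h, Nat.cast_zero, zero_sub, neg_add_cancel, h0]
    rw [← two_mul, pow_mul]
    simp only [even_two, Even.neg_pow, one_pow, mul_one, one_mul]
    congr 1
    ext i j
    simp
  · intro j _ hj
    have : (j : ℕ) < m := by
      have h1 := j.is_lt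
      have h2 : (j : ℕ) ≠ m := fun e => hj (Fin.ext e)
      omega
    simp only [Matrix.of_apply, Fin.val_last, h]
    rw [cz_neg _ (by omega)]
    simp
  · simp

/-- Schur function with conjugate index -/
noncomputable def SS {R : Type*} [CommRing R] (C : PowerSeries R) (mu : ℕ → ℕ) : R :=
  DD C (conjP mu 0) mu

theorem DD_eq_SS {R : Type*} [CommRing R] (C : PowerSeries R) (hC : PowerSeries.coeff 0 C = 1)
    {mu : ℕ → ℕ} (hmu : IsPart mu) (m : ℕ) (hm : conjP mu 0 ≤ m) : DD C m mu = SS C mu := by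
  induction m, hm using Nat.le_induction with
  | base => rfl
  | succ m hm ih =>
    rw [DD_succ C hC, ih]
    by_contra hne
    have := (conjP_lt hmu m 0).2 (Nat.pos_of_ne_zero hne)
    omega

/-- linear independence over ℤ -/
def Indep {ι M : Type*} [AddCommGroup M] (S : Set ι) (v : ι → M) : Prop :=
  ∀ (t : Finset ι) (a : ι → ℤ), (∀ i ∈ t, i ∈ S) → ∑ i ∈ t, a i • v i = 0 → ∀ i ∈ t, a i = 0

theorem Indep.comp {ι κ M : Type*} [AddCommGroup M] {S : Set ι} {T : Set κ} {v : κ → M}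
    (h : Indep T v) (φ : ι → κ) (hφ : ∀ i ∈ S, φ i ∈ T) (hinj : Set.InjOn φ S) (w : ι → M)
    (hw : ∀ i ∈ S, w i = v (φ i)) : Indep S w := by
  classical
  intro t a ht hs i hi
  have hinj' : Set.InjOn φ t := fun x hx y hy e => hinj (ht x hx) (ht y hy) e
  rcases isEmpty_or_nonempty ι with hE | hE
  · exact (hE.false i).elim
  have hl : ∀ x ∈ t, Function.invFunOn φ (t : Set ι) (φ x) = x :=
    fun x hx => hinj'.leftInvOn_invFunOn hx
  have := h (t.image φ) (fun k => a (Function.invFunOn φ (t : Set ι) k)) (by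
      intro k hk
      obtain ⟨x, hx, rfl⟩ := Finset.mem_image.1 hk
      exact hφ x (ht x hx)) (by
      rw [Finset.sum_image hinj', ← hs]
      refine Finset.sum_congr rfl fun x hx => ?_
      rw [hl x hx, hw x (ht x hx)]) (φ i) (Finset.mem_image_of_mem _ hi)
  simpa only [hl i hi] using this

theorem Indep.of_coeff {ι R : Type*} [CommRing R] {S : Set ι} (v : ι → Polynomial R)
    (u : ι → R) (deg : ι → ℕ) (h1 : ∀ i ∈ S, (v i).natDegree ≤ deg i)
    (h2 : ∀ i ∈ S, (v i).coeff (deg i) = u i)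
    (h3 : ∀ d, Indep {i | i ∈ S ∧ deg i = d} u) : Indep S v := by
  classical
  intro t a ht hs
  by_contra hne
  push Not at hne
  obtain ⟨i0, hi0, hai0⟩ := hne
  have hnon : (t.filter fun i => a i ≠ 0).Nonempty := ⟨i0, by simp [hi0, hai0]⟩
  obtain ⟨j, hj, hmax⟩ := Finset.exists_max_image _ deg hnon
  rw [Finset.mem_filter] at hj
  have hc := congrArg (fun q => Polynomial.coeff q (deg j)) hs
  simp only [Polynomial.finsetSum_coeff, Polynomial.coeff_smul, Polynomial.coeff_zero] at hc
  have := h3 (deg j) (t.filter fun i => deg i = deg j) a (by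
    intro i hi
    rw [Finset.mem_filter] at hi
    exact ⟨ht i hi.1, hi.2⟩) (by
    rw [← hc, Finset.sum_filter]
    refine Finset.sum_congr rfl fun i hi => ?_
    split_ifs with hd
    · rw [← h2 i (ht i hi), hd]
    · by_cases ha : a i = 0
      · simp [ha]
      · have hle := hmax i (by simp [hi, ha])
        rw [Polynomial.coeff_eq_zero_of_natDegree_lt, smul_zero]
        exact lt_of_le_of_lt (h1 i (ht i hi)) (lt_of_le_of_ne hle hd)) j (by simp [hj.1])
  exact hj.2 this
def Hook (n p : ℕ) : Set (ℕ → ℕ) := {mu | IsPart mu ∧ mu n ≤ p}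

theorem y_step {R : Type*} [CommRing R] (C : PowerSeries R) (hC : PowerSeries.coeff 0 C = 1)
    (n p : ℕ) (h : Indep (Hook n p) (SS C)) :
    Indep (Hook n (p + 1)) (SS (PowerSeries.map Polynomial.C C *
      (1 + PowerSeries.C Polynomial.X * PowerSeries.X))) := by
  have hdet : ∀ mu : ℕ → ℕ, SS (PowerSeries.map Polynomial.C C *
      (1 + PowerSeries.C Polynomial.X * PowerSeries.X)) mu =
      ((Polynomial.X : Polynomial R) • (Matrix.of fun k l : Fin (conjP mu 0) =>
        cz C ((mu (k : ℕ) : ℤ) - (k : ℕ) + (l : ℕ) - 1)).map Polynomial.C +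
        (Matrix.of fun k l : Fin (conjP mu 0) =>
        cz C ((mu (k : ℕ) : ℤ) - (k : ℕ) + (l : ℕ))).map Polynomial.C).det := by
    intro mu
    unfold SS DD
    congr 1
    ext1 i j
    simp only [Matrix.of_apply, cz_mul, cz_map, Matrix.add_apply, Matrix.smul_apply,
      Matrix.map_apply, smul_eq_mul]
    ring
  have hpm : ∀ mu : ℕ → ℕ, IsPart mu → IsPart (fun k => mu k - 1) := by
    rintro mu ⟨ha, N, hN⟩
    exact ⟨fun a b hab => Nat.sub_le_sub_right (ha hab) 1, N, fun k hk => by simp [hN k hk]⟩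
  refine Indep.of_coeff _ (fun mu => SS C (fun k => mu k - 1)) (fun mu => conjP mu 0) ?_ ?_ ?_
  · intro mu hmu
    rw [hdet]
    simpa using Polynomial.natDegree_det_X_add_C_le
      (Matrix.of fun k l : Fin (conjP mu 0) =>
        cz C ((mu (k : ℕ) : ℤ) - (k : ℕ) + (l : ℕ) - 1)) (Matrix.of fun k l : Fin (conjP mu 0) =>
        cz C ((mu (k : ℕ) : ℤ) - (k : ℕ) + (l : ℕ)))
  · intro mu hmu
    rw [hdet]
    have := Polynomial.coeff_det_X_add_C_card
      (Matrix.of fun k l : Fin (conjP mu 0) =>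
        cz C ((mu (k : ℕ) : ℤ) - (k : ℕ) + (l : ℕ) - 1)) (Matrix.of fun k l : Fin (conjP mu 0) =>
        cz C ((mu (k : ℕ) : ℤ) - (k : ℕ) + (l : ℕ)))
    rw [Fintype.card_fin] at this
    rw [this, ← DD_eq_SS C hC (hpm mu hmu.1) (conjP mu 0)]
    · unfold DD
      congr 1
      ext i j
      simp only [Matrix.of_apply]
      congr 1
      have := (conjP_lt hmu.1 i 0).1 i.is_lt
      omega
    · by_contra hlt
      push Not at hlt
      have h1 := (conjP_lt (hpm mu hmu.1) _ _).1 hlt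
      have h2 : ¬ (0 < mu (conjP mu 0)) := by
        rw [← conjP_lt hmu.1]; exact lt_irrefl _
      omega
  · intro d
    refine h.comp (fun mu k => mu k - 1) ?_ ?_ _ ?_
    rotate_left 2
    · intro mu _; rfl
    · rintro mu ⟨⟨h1, h2⟩, _⟩
      exact ⟨hpm mu h1, by simp only; omega⟩
    · rintro mu ⟨⟨h1, h2⟩, h3⟩ nu ⟨⟨h1', h2'⟩, h3'⟩ he
      funext k
      have e := congrFun he k
      simp only at e h3 h3'
      have a1 := conjP_lt h1 k 0
      have a2 := conjP_lt h1' k 0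
      rw [h3] at a1
      rw [h3'] at a2
      omega

theorem coeff_cz {R : Type*} [CommRing R] (C : PowerSeries R) (C' : PowerSeries (Polynomial R))
    (h : C' * (1 + PowerSeries.C (-Polynomial.X) * PowerSeries.X) = PowerSeries.map Polynomial.C C)
    (d j : ℕ) : (cz C' (d : ℤ)).coeff j = cz C ((d : ℤ) - j) := by
  have rec1 : ∀ d : ℤ, cz C' d = Polynomial.C (cz C d) + Polynomial.X * cz C' (d - 1) := by
    intro d
    have := cz_mul C' (-Polynomial.X) d
    rw [h, cz_map] at this
    rw [this]; ring
  induction d generalizing j with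
  | zero =>
    rw [rec1, cz_neg C' (by omega)]
    cases j with
    | zero => simp
    | succ j => rw [cz_neg C (d := ((0 : ℕ) : ℤ) - (j + 1 : ℕ)) (by omega)]; simp
  | succ d ih =>
    rw [rec1]
    have e : ((d + 1 : ℕ) : ℤ) - 1 = (d : ℕ) := by push_cast; ring
    rw [e]
    cases j with
    | zero => simp
    | succ j =>
      rw [Polynomial.coeff_add, Polynomial.coeff_X_mul, ih, Polynomial.coeff_C_succ, zero_add]
      congr 1
      push_cast; ring

theorem x_step {R : Type*} [CommRing R] (C : PowerSeries R) (hC : PowerSeries.coeff 0 C = 1)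
    (C' : PowerSeries (Polynomial R))
    (hC' : C' * (1 + PowerSeries.C (-Polynomial.X) * PowerSeries.X) = PowerSeries.map Polynomial.C C)
    (n p : ℕ) (h : Indep (Hook n p) (SS C)) :
    Indep (Hook (n + 1) p) (SS C') := by
  have hC0 : PowerSeries.coeff 0 C' = 1 := by
    have := congrArg (PowerSeries.coeff 0) hC'
    simpa [hC] using this
  have rec1 : ∀ d : ℤ, cz C' d = Polynomial.C (cz C d) + Polynomial.X * cz C' (d - 1) := by
    intro d
    have := cz_mul C' (-Polynomial.X) d
    rw [hC', cz_map] at this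
    rw [this]; ring
  have hdet : ∀ mu : ℕ → ℕ, IsPart mu → ∃ g : Fin (conjP mu 0 + 1) → R,
      g 0 = DD C (conjP mu 0) (fun k => mu (k + 1)) ∧
      SS C' mu = ∑ i : Fin (conjP mu 0 + 1),
        cz C' ((mu (i : ℕ) : ℤ) - (i : ℕ)) * Polynomial.C (g i) := by
    intro mu hmu
    set m := conjP mu 0 with hm
    let B : Matrix (Fin (m + 1)) (Fin (m + 1)) R := Matrix.of fun k l =>
      cz C ((mu (k : ℕ) : ℤ) - (k : ℕ) + (l : ℕ))
    refine ⟨fun i => (-1) ^ (i : ℕ) * (B.submatrix i.succAbove Fin.succ).det, ?_, ?_⟩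
    · simp only [Fin.val_zero, pow_zero, one_mul]
      unfold DD
      congr 1
      ext i j
      simp only [B, Matrix.submatrix_apply, Matrix.of_apply, Fin.zero_succAbove, Fin.val_succ]
      congr 1
      push_cast; ring
    · rw [← DD_eq_SS C' hC0 hmu (m + 1) (by omega)]
      unfold DD
      let A : Matrix (Fin (m + 1)) (Fin (m + 1)) (Polynomial R) := Matrix.of fun k l =>
        Fin.cases (cz C' ((mu (k : ℕ) : ℤ) - (k : ℕ))) (fun l' => Polynomial.C (B k l'.succ)) l
      rw [Matrix.det_eq_of_forall_col_eq_smul_add_pred (B := A) (fun _ => Polynomial.X),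
        Matrix.det_succ_column_zero]
      · refine Finset.sum_congr rfl fun i _ => ?_
        have e1 : A i 0 = cz C' ((mu (i : ℕ) : ℤ) - (i : ℕ)) := by simp [A]
        have e2 : (A.submatrix i.succAbove Fin.succ).det =
            Polynomial.C (B.submatrix i.succAbove Fin.succ).det := by
          rw [RingHom.map_det]
          congr 1
        rw [e1, e2]
        simp only [map_mul, map_pow, map_neg, map_one]
        ring
      · intro i
        simp [A]
      · intro i j
        simp only [A, B, Matrix.of_apply, Fin.cases_succ, Fin.val_succ, Fin.val_castSucc]
        rw [rec1]
        congr 3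
        push_cast; ring
  have hpm : ∀ mu : ℕ → ℕ, IsPart mu → IsPart (fun k => mu (k + 1)) := by
    rintro mu ⟨ha, N, hN⟩
    exact ⟨fun a b hab => ha (by omega), N, fun k hk => hN _ (by omega)⟩
  have cz0 : cz C 0 = 1 := by simpa [hC] using cz_nat C 0
  refine Indep.of_coeff _ (fun mu => SS C (fun k => mu (k + 1))) (fun mu => mu 0) ?_ ?_ ?_
  · intro mu hmu
    obtain ⟨g, -, hg⟩ := hdet mu hmu.1
    rw [hg, Polynomial.natDegree_le_iff_coeff_eq_zero]
    intro N hN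
    rw [Polynomial.finsetSum_coeff]
    refine Finset.sum_eq_zero fun i _ => ?_
    rw [Polynomial.coeff_mul_C]
    have := hmu.1.1 (Nat.zero_le i)
    rcases lt_or_ge ((mu (i : ℕ) : ℤ) - (i : ℕ)) 0 with hl | hl
    · rw [cz_neg _ hl]; simp
    · obtain ⟨e, he⟩ := Int.eq_ofNat_of_zero_le hl
      rw [he, coeff_cz C C' hC', cz_neg _ (by omega), zero_mul]
  · intro mu hmu
    obtain ⟨g, hg0, hg⟩ := hdet mu hmu.1
    rw [hg, Polynomial.finsetSum_coeff, Finset.sum_eq_single 0]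
    · rw [Polynomial.coeff_mul_C]
      simp only [Fin.val_zero, Nat.cast_zero, sub_zero]
      rw [coeff_cz C C' hC', sub_self, cz0, one_mul, hg0]
      apply DD_eq_SS C hC (hpm mu hmu.1)
      by_contra hlt
      push Not at hlt
      have h1 := (conjP_lt (hpm mu hmu.1) _ _).1 hlt
      have h2 : ¬ (0 < mu (conjP mu 0)) := by
        rw [← conjP_lt hmu.1]; exact lt_irrefl _
      have h3 := hmu.1.1 (Nat.le_succ (conjP mu 0))
      simp only [Nat.succ_eq_add_one] at h3
      omega
    · intro i _ hi
      rw [Polynomial.coeff_mul_C]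
      have := hmu.1.1 (Nat.zero_le i)
      have hi' : (i : ℕ) ≠ 0 := fun e => hi (Fin.ext e)
      rcases lt_or_ge ((mu (i : ℕ) : ℤ) - (i : ℕ)) 0 with hl | hl
      · rw [cz_neg _ hl]; simp
      · obtain ⟨e, he⟩ := Int.eq_ofNat_of_zero_le hl
        rw [he, coeff_cz C C' hC', cz_neg _ (by omega), zero_mul]
    · simp
  · intro d
    refine h.comp (fun mu k => mu (k + 1)) ?_ ?_ _ ?_
    rotate_left 2
    · intro mu _; rfl
    · rintro mu ⟨⟨h1, h2⟩, _⟩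
      exact ⟨hpm mu h1, h2⟩
    · rintro mu ⟨⟨h1, h2⟩, h3⟩ nu ⟨⟨h1', h2'⟩, h3'⟩ he
      funext k
      cases k with
      | zero => exact h3.trans h3'.symm
      | succ k => exact congrFun he k

/-- the linear factor product -/
noncomputable def PP {R : Type*} [CommRing R] {n : ℕ} (x : Fin n → R) : PowerSeries R :=
  ∏ i, (1 + PowerSeries.C (x i) * PowerSeries.X)

theorem PP_map {R S : Type*} [CommRing R] [CommRing S] (f : R →+* S) {n : ℕ} (x : Fin n → R) :
    PowerSeries.map f (PP x) = PP (fun i => f (x i)) := by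
  simp [PP, map_prod]

theorem PP_coeff_zero {R : Type*} [CommRing R] {n : ℕ} (x : Fin n → R) :
    PowerSeries.coeff 0 (PP x) = 1 := by
  rw [PowerSeries.coeff_zero_eq_constantCoeff]
  simp [PP, map_prod]

theorem PP_isUnit {R : Type*} [CommRing R] {n : ℕ} (x : Fin n → R) : IsUnit (PP x) := by
  rw [PowerSeries.isUnit_iff_constantCoeff, ← PowerSeries.coeff_zero_eq_constantCoeff_apply,
    PP_coeff_zero]
  exact isUnit_one

theorem coeff_zero_of {R : Type*} [CommRing R] {n p : ℕ} (x : Fin n → R) (y : Fin p → R)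
    (C : PowerSeries R) (h : C * PP x = PP y) : PowerSeries.coeff 0 C = 1 := by
  have := congrArg (PowerSeries.coeff 0) h
  rw [PP_coeff_zero, PowerSeries.coeff_mul, Finset.Nat.antidiagonal_zero, Finset.sum_singleton,
    PP_coeff_zero, mul_one] at this
  exact this

theorem exists_indep (n p : ℕ) : ∃ (R : Type) (_ : CommRing R) (x : Fin n → R) (y : Fin p → R)
    (C : PowerSeries R), C * PP x = PP y ∧ Indep (Hook n p) (SS C) := by
  induction p with
  | zero =>
    induction n with
    | zero =>
      refine ⟨ℤ, inferInstance, Fin.elim0, Fin.elim0, 1, by simp [PP], ?_⟩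
      intro t a ht hs i hi
      have hz : ∀ j ∈ t, j = fun _ => 0 := by
        intro j hj
        obtain ⟨h1, h2⟩ := ht j hj
        funext k
        have := h1.1 (Nat.zero_le k)
        omega
      have : t = {i} := by
        ext j
        rw [Finset.mem_singleton]
        constructor
        · intro hj; rw [hz j hj, hz i hi]
        · rintro rfl; exact hi
      rw [this, Finset.sum_singleton] at hs
      have hS : SS (1 : PowerSeries ℤ) i = 1 := by
        have hc : conjP i 0 = 0 := by
          by_contra hne
          have := (conjP_lt (ht i hi).1 0 0).1 (Nat.pos_of_ne_zero hne)
          rw [hz i hi] at this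
          exact lt_irrefl _ this
        unfold SS
        rw [hc]
        simp [DD]
      rw [hS] at hs
      simpa using hs
    | succ n ih =>
      obtain ⟨R, _, x, y, C, h, hI⟩ := ih
      have hu : IsUnit (1 + PowerSeries.C (-Polynomial.X : Polynomial R) * PowerSeries.X) := by
        rw [PowerSeries.isUnit_iff_constantCoeff]; simp
      obtain ⟨v, hv⟩ := hu
      have hC' : (PowerSeries.map Polynomial.C C * ((v⁻¹ : (PowerSeries (Polynomial R))ˣ) : PowerSeries (Polynomial R))) *
        (1 + PowerSeries.C (-Polynomial.X) * PowerSeries.X) = PowerSeries.map Polynomial.C C := by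
        rw [← hv]; simp [mul_assoc]
      refine ⟨Polynomial R, inferInstance, Fin.cons (-Polynomial.X) (fun i => Polynomial.C (x i)),
        fun i => Polynomial.C (y i), _, ?_, x_step C (coeff_zero_of x y C h) _ hC' n 0 hI⟩
      have e : PP (Fin.cons (-Polynomial.X) (fun i => Polynomial.C (x i)) : Fin (n + 1) → Polynomial R)
          = (1 + PowerSeries.C (-Polynomial.X) * PowerSeries.X) * PowerSeries.map Polynomial.C (PP x) := by
        rw [PP_map]; simp [PP, Fin.prod_univ_succ]
      rw [e, ← mul_assoc, hC', ← map_mul, h, PP_map]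
  | succ p ih =>
    obtain ⟨R, _, x, y, C, h, hI⟩ := ih
    refine ⟨Polynomial R, inferInstance, fun i => Polynomial.C (x i),
      Fin.cons (Polynomial.X) (fun i => Polynomial.C (y i)), _, ?_,
      y_step C (coeff_zero_of x y C h) n p hI⟩
    have e : PP (Fin.cons (Polynomial.X) (fun i => Polynomial.C (y i)) : Fin (p + 1) → Polynomial R)
        = (1 + PowerSeries.C (Polynomial.X) * PowerSeries.X) * PowerSeries.map Polynomial.C (PP y) := by
      rw [PP_map]; simp [PP, Fin.prod_univ_succ]
    rw [e, ← h, map_mul, PP_map]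
    ring
theorem cz_conv {R : Type*} [CommRing R] (C P : PowerSeries R) (N : ℕ)
    (hP : ∀ i, N < i → PowerSeries.coeff i P = 0) (d : ℕ) :
    cz (C * P) (d : ℤ) = ∑ j ∈ Finset.range (N + 1), cz C ((d : ℤ) - j) * PowerSeries.coeff j P := by
  rw [cz_nat, mul_comm, PowerSeries.coeff_mul, Finset.Nat.sum_antidiagonal_eq_sum_range_succ_mk]
  have h1 : ∑ k ∈ Finset.range (d + 1), PowerSeries.coeff k P * PowerSeries.coeff (d - k) C
      = ∑ j ∈ Finset.range (max d N + 1), cz C ((d : ℤ) - j) * PowerSeries.coeff j P := by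
    rw [← Finset.sum_subset (Finset.range_mono (show d + 1 ≤ max d N + 1 by omega))]
    · refine Finset.sum_congr rfl fun k hk => ?_
      rw [Finset.mem_range] at hk
      rw [show (d : ℤ) - k = ((d - k : ℕ) : ℤ) by omega, cz_nat, mul_comm]
    · intro k _ hk
      rw [Finset.mem_range] at hk
      rw [cz_neg _ (by omega), zero_mul]
  rw [h1]
  symm
  refine Finset.sum_subset (Finset.range_mono (show N + 1 ≤ max d N + 1 by omega)) ?_
  intro k _ hk
  rw [Finset.mem_range] at hk
  rw [hP k (by omega), mul_zero]

theorem det_zero_block {R : Type*} [CommRing R] (m n : ℕ) (hm : n + 1 ≤ m)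
    (M : Matrix (Fin m) (Fin m) R)
    (h : ∀ k l : Fin m, (k : ℕ) ≤ n → n ≤ (l : ℕ) → M k l = 0) : M.det = 0 := by
  rw [Matrix.det_apply]
  refine Finset.sum_eq_zero fun σ _ => ?_
  have : ∃ i : Fin m, n ≤ (i : ℕ) ∧ (σ i : ℕ) ≤ n := by
    by_contra hne
    push Not at hne
    have hc : (Finset.univ.filter fun i : Fin m => n ≤ (i : ℕ)).card ≤
        (Finset.univ.filter fun i : Fin m => n + 1 ≤ (i : ℕ)).card := by
      refine Finset.card_le_card_of_injOn σ ?_ σ.injective.injOn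
      intro i hi
      simp only [Finset.coe_filter, Finset.mem_univ, true_and, Set.mem_ofPred_eq] at hi ⊢
      exact hne i hi
    have hlt : (Finset.univ.filter fun i : Fin m => n + 1 ≤ (i : ℕ)).card <
        (Finset.univ.filter fun i : Fin m => n ≤ (i : ℕ)).card := by
      apply Finset.card_lt_card
      rw [Finset.ssubset_iff_of_subset]
      · exact ⟨⟨n, by omega⟩, by simp, by simp⟩
      · intro i hi
        simp only [Finset.mem_filter, Finset.mem_univ, true_and] at hi ⊢
        omega
    omega
  obtain ⟨i, h1, h2⟩ := this
  have hp : ∏ i, M (σ i) i = 0 := Finset.prod_eq_zero (Finset.mem_univ i) (h _ _ h2 h1)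
  rw [hp, smul_zero]

theorem DD_vanish {R : Type*} [CommRing R] (C P Q : PowerSeries R) (n p : ℕ) (hCP : C * P = Q)
    (hP0 : PowerSeries.coeff 0 P = 1) (hP : ∀ i, n < i → PowerSeries.coeff i P = 0)
    (hQ : ∀ i, p < i → PowerSeries.coeff i Q = 0) (mu : ℕ → ℕ) (hmu : ∀ k ≤ n, p + 1 ≤ mu k)
    (m : ℕ) (hm : n + 1 ≤ m) : DD C m mu = 0 := by
  let U : Matrix (Fin m) (Fin m) R := Matrix.of fun k l => cz P (((l : ℕ) : ℤ) - (k : ℕ))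
  have hU : U.det = 1 := by
    rw [Matrix.det_of_isUpperTriangular]
    · refine Finset.prod_eq_one fun i _ => ?_
      have := cz_nat P 0
      simpa [U, hP0] using this
    · intro i j hij
      have : (j : ℕ) < (i : ℕ) := hij
      simp only [U, Matrix.of_apply]
      exact cz_neg _ (by omega)
  unfold DD
  rw [← mul_one (Matrix.det _), ← hU, ← Matrix.det_mul]
  apply det_zero_block m n hm
  intro k l hk hl
  rw [Matrix.mul_apply]
  simp only [U, Matrix.of_apply]
  have hk' := hmu k hk
  obtain ⟨d, hd⟩ := Int.eq_ofNat_of_zero_le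
    (show 0 ≤ (mu (k : ℕ) : ℤ) - (k : ℕ) + (l : ℕ) by omega)
  have hz : cz (C * P) (d : ℤ) = 0 := by
    rw [cz_nat, hCP, hQ]
    omega
  rw [cz_conv C P l (fun i hi => hP i (by omega)), ← Finset.sum_range_reflect] at hz
  rw [← hz, Fin.sum_univ_eq_sum_range (fun j : ℕ => cz C ((mu (k : ℕ) : ℤ) - (k : ℕ) + (j : ℕ)) *
    cz P (((l : ℕ) : ℤ) - (j : ℕ))) m,
    ← Finset.sum_subset (Finset.range_mono (show (l : ℕ) + 1 ≤ m from l.is_lt))]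
  · refine Finset.sum_congr rfl fun j hj => ?_
    rw [Finset.mem_range] at hj
    rw [← cz_nat P]
    congr 2 <;> omega
  · intro j _ hj
    rw [Finset.mem_range] at hj
    rw [cz_neg P (by omega), mul_zero]

theorem coeff_PP {R : Type*} [CommRing R] {p : ℕ} (y : Fin p → R) (b : ℕ) :
    PowerSeries.coeff b (PP y) =
      ∑ t ∈ Finset.powersetCard b (Finset.univ : Finset (Fin p)), ∏ i ∈ t, y i := by
  unfold PP
  rw [Finset.prod_one_add, map_sum, Finset.powersetCard_eq_filter, Finset.sum_filter]
  refine Finset.sum_congr rfl fun t _ => ?_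
  rw [Finset.prod_mul_distrib, Finset.prod_const, ← map_prod, PowerSeries.coeff_C_mul,
    PowerSeries.coeff_X_pow]
  by_cases h : b = t.card
  · simp [h]
  · rw [if_neg h, if_neg (fun e => h e.symm), mul_zero]

theorem coeff_PP_eq_zero {R : Type*} [CommRing R] {p : ℕ} (y : Fin p → R) (b : ℕ) (h : p < b) :
    PowerSeries.coeff b (PP y) = 0 := by
  rw [coeff_PP, Finset.powersetCard_eq_empty.2 (by simpa using h), Finset.sum_empty]

theorem geom_mul {R : Type*} [CommRing R] (x : R) :
    PowerSeries.mk (fun a => (-x) ^ a) * (1 + PowerSeries.C x * PowerSeries.X) = 1 := by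
  ext d
  rw [← cz_nat, cz_mul, cz_nat, PowerSeries.coeff_mk, PowerSeries.coeff_one]
  cases d with
  | zero => rw [cz_neg _ (by omega)]; simp
  | succ d =>
    rw [show ((d + 1 : ℕ) : ℤ) - 1 = (d : ℕ) by push_cast; ring, cz_nat, PowerSeries.coeff_mk,
      if_neg (by omega)]
    ring

theorem hgen {R : Type*} [CommRing R] {n : ℕ} (x : Fin n → R) :
    PowerSeries.mk (fun a => (-1) ^ a * ∑ f ∈ Finset.Nat.antidiagonalTuple n a, ∏ k, x k ^ f k)
      * PP x = 1 := by
  have : PowerSeries.mk (fun a => (-1) ^ a * ∑ f ∈ Finset.Nat.antidiagonalTuple n a,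
      ∏ k, x k ^ f k) = ∏ i, PowerSeries.mk (fun a => (-x i) ^ a) := by
    ext d
    rw [PowerSeries.coeff_mk, PowerSeries.coeff_prod, Finset.mul_sum]
    symm
    refine Finset.sum_bij (fun l _ => (l : Fin n → ℕ)) ?_ ?_ ?_ ?_
    · intro l hl
      rw [Finset.mem_finsuppAntidiag] at hl
      exact Finset.Nat.mem_antidiagonalTuple.2 hl.1
    · intro a _ b _ h
      exact DFunLike.coe_injective h
    · intro f hf
      refine ⟨Finsupp.equivFunOnFinite.symm f, ?_, by simp⟩
      rw [Finset.mem_finsuppAntidiag]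
      exact ⟨by simpa using Finset.Nat.mem_antidiagonalTuple.1 hf, Finset.subset_univ _⟩
    · intro l hl
      rw [Finset.mem_finsuppAntidiag] at hl
      simp only [PowerSeries.coeff_mk]
      rw [← hl.1, ← Finset.prod_pow_eq_pow_sum, ← Finset.prod_mul_distrib]
      refine Finset.prod_congr rfl fun i _ => ?_
      rw [neg_pow]
  rw [this, PP, ← Finset.prod_mul_distrib]
  exact Finset.prod_eq_one fun i _ => geom_mul _

theorem cpoly_gen (n p : ℕ) : PowerSeries.mk (fun d => cpoly n p d) *
    PP (fun i : Fin n => (X (Sum.inl i) : MvPolynomial (Fin n ⊕ Fin p) ℤ)) =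
    PP (fun i : Fin p => (X (Sum.inr i) : MvPolynomial (Fin n ⊕ Fin p) ℤ)) := by
  have : PowerSeries.mk (fun d => cpoly n p d) =
      PowerSeries.mk (fun a => (-1) ^ a * ∑ f ∈ Finset.Nat.antidiagonalTuple n a,
        ∏ k, (X (Sum.inl k) : MvPolynomial (Fin n ⊕ Fin p) ℤ) ^ f k) *
      PP (fun i : Fin p => (X (Sum.inr i) : MvPolynomial (Fin n ⊕ Fin p) ℤ)) := by
    ext1 d
    rw [PowerSeries.coeff_mul, Finset.Nat.sum_antidiagonal_eq_sum_range_succ_mk,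
      PowerSeries.coeff_mk]
    unfold cpoly
    refine Finset.sum_congr rfl fun a _ => ?_
    rw [PowerSeries.coeff_mk, coeff_PP]
    rfl
  rw [this, mul_right_comm, hgen, one_mul]

/-- generic series -/
noncomputable def GG : PowerSeries (MvPolynomial ℕ ℤ) := PowerSeries.mk fun d => cvar d

theorem cz_GG (d : ℤ) : cz GG d = cvar d := by
  rcases lt_or_ge d 0 with h | h
  · rw [cz_neg _ h, cvar, if_pos h]
  · lift d to ℕ using h
    rw [cz_nat, GG, PowerSeries.coeff_mk]

theorem GG_zero : PowerSeries.coeff 0 GG = 1 := by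
  simp [GG, cvar]

theorem SchurC_eq {lam : ℕ → ℕ} (h : IsPart lam) : SchurC lam = SS GG (conjP lam) := by
  unfold SS
  rw [conjP_conjP h]
  unfold SchurC DD
  simp only [cz_GG]

theorem map_GG (n p : ℕ) : PowerSeries.map
    ((aeval (fun d : ℕ => cpoly n p (d + 1)) : MvPolynomial ℕ ℤ →ₐ[ℤ] _) :
      MvPolynomial ℕ ℤ →+* MvPolynomial (Fin n ⊕ Fin p) ℤ) GG
    = PowerSeries.mk (fun d => cpoly n p d) := by
  ext1 d
  rw [PowerSeries.coeff_map, GG, PowerSeries.coeff_mk, PowerSeries.coeff_mk]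
  cases d with
  | zero =>
    have := coeff_zero_of _ _ _ (cpoly_gen n p)
    rw [PowerSeries.coeff_mk] at this
    rw [this]
    simp [cvar]
  | succ d =>
    have : cvar ((d + 1 : ℕ) : ℤ) = X d := by
      unfold cvar
      rw [if_neg (by omega), if_neg (by omega)]
      congr 1
    rw [this]
    simp
theorem sq_le_sq_sum (s : Multiset ℕ) : (s.map (fun d => d ^ 2)).sum ≤ s.sum ^ 2 := by
  induction s using Multiset.induction_on with
  | empty => simp
  | cons a s ih =>
    rw [Multiset.map_cons, Multiset.sum_cons, Multiset.sum_cons]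
    nlinarith [Nat.zero_le (a * s.sum)]

theorem rearr {m : ℕ} (b : ℕ → ℕ) (hb : Antitone b) (σ : Equiv.Perm (Fin m)) (hσ : σ ≠ 1) :
    ∑ i : Fin m, (b (i : ℕ) : ℤ) ^ 2 <
      ∑ i : Fin m, ((b (σ i : ℕ) : ℤ) - (σ i : ℕ) + (i : ℕ)) ^ 2 := by
  have h1 : ∑ i : Fin m, ((b (σ i : ℕ) : ℤ) - (σ i : ℕ) + (i : ℕ)) ^ 2 =
      ∑ i : Fin m, (b (σ i : ℕ) : ℤ) ^ 2 + 2 * (∑ i : Fin m, (b (σ i : ℕ) : ℤ) * ((i : ℕ) : ℤ) -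
        ∑ i : Fin m, (b (σ i : ℕ) : ℤ) * ((σ i : ℕ) : ℤ)) +
        ∑ i : Fin m, (((i : ℕ) : ℤ) - (σ i : ℕ)) ^ 2 := by
    rw [← Finset.sum_sub_distrib, Finset.mul_sum, ← Finset.sum_add_distrib,
      ← Finset.sum_add_distrib]
    refine Finset.sum_congr rfl fun i _ => ?_
    ring
  have h2 : ∑ i : Fin m, (b (σ i : ℕ) : ℤ) ^ 2 = ∑ i : Fin m, (b (i : ℕ) : ℤ) ^ 2 :=
    Equiv.sum_comp σ (fun i : Fin m => (b (i : ℕ) : ℤ) ^ 2)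
  have h3 : ∑ i : Fin m, (b (σ i : ℕ) : ℤ) * ((σ i : ℕ) : ℤ) =
      ∑ i : Fin m, (b (i : ℕ) : ℤ) * ((i : ℕ) : ℤ) :=
    Equiv.sum_comp σ (fun i : Fin m => (b (i : ℕ) : ℤ) * ((i : ℕ) : ℤ))
  have h4 : ∑ i : Fin m, (b (i : ℕ) : ℤ) * ((i : ℕ) : ℤ) ≤
      ∑ i : Fin m, (b (σ i : ℕ) : ℤ) * ((i : ℕ) : ℤ) := by
    have hav : Antivary (fun i : Fin m => (b (i : ℕ) : ℤ)) (fun i : Fin m => ((i : ℕ) : ℤ)) := by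
      intro i j hij
      simp only at hij ⊢
      exact_mod_cast hb (by omega)
    exact hav.sum_mul_le_sum_comp_perm_mul (σ := σ)
  have h5 : 0 < ∑ i : Fin m, (((i : ℕ) : ℤ) - (σ i : ℕ)) ^ 2 := by
    obtain ⟨i, hi⟩ : ∃ i, σ i ≠ i := by
      by_contra hne
      push Not at hne
      exact hσ (Equiv.ext hne)
    refine Finset.sum_pos' (fun i _ => sq_nonneg _) ⟨i, Finset.mem_univ i, ?_⟩
    apply sq_pos_of_ne_zero
    intro e
    apply hi
    apply Fin.ext
    omega
  rw [h1, h2, h3]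
  linarith

theorem cprod_mem (N : ℕ) : ∀ s : Multiset ℕ, s.sum ^ 2 - (s.map (fun d => d ^ 2)).sum = N →
    (s.map (fun d : ℕ => cvar (d : ℤ))).prod ∈
      Submodule.span ℤ (SS GG '' {mu | IsPart mu}) := by
  induction N using Nat.strong_induction_on with
  | _ N ih =>
  intro s hs
  obtain ⟨L, hL, hsort⟩ : ∃ L : List ℕ, (L : Multiset ℕ) = s ∧ L.Pairwise (· ≥ ·) :=
    ⟨s.sort (· ≥ ·), Multiset.sort_eq _ _, Multiset.pairwise_sort _ _⟩
  set b : ℕ → ℕ := fun k => L.getD k 0 with hb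
  set m := L.length with hm
  have hbz : ∀ k, m ≤ k → b k = 0 := fun k hk => List.getD_eq_default _ _ hk
  have hbg : ∀ i : Fin L.length, b (i : ℕ) = L[i] := fun i => by simp [hb]
  have hba : Antitone b := by
    intro i j hij
    rcases lt_or_ge j m with hj | hj
    · rcases eq_or_lt_of_le hij with rfl | hlt
      · exact le_rfl
      · have := List.pairwise_iff_getElem.1 hsort i j (by omega) hj hlt
        rw [hbg ⟨j, hj⟩, hbg ⟨i, by omega⟩]
        exact this
    · rw [hbz j hj]; exact Nat.zero_le _
  have hpart : IsPart b := ⟨hba, m, hbz⟩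
  have hprod : (s.map (fun d : ℕ => cvar (d : ℤ))).prod = ∏ i : Fin m, cvar (b (i : ℕ) : ℤ) := by
    rw [← hL, Multiset.map_coe, Multiset.prod_coe, ← Fin.prod_univ_fun_getElem]
    exact Finset.prod_congr rfl fun i _ => by rw [hbg]; rfl
  have hsum : s.sum = ∑ i : Fin m, b (i : ℕ) := by
    rw [← hL, Multiset.sum_coe, ← Fin.sum_univ_getElem]
    exact Finset.sum_congr rfl fun i _ => by rw [hbg]; rfl
  have hsq : (s.map (fun d => d ^ 2)).sum = ∑ i : Fin m, b (i : ℕ) ^ 2 := by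
    rw [← hL, Multiset.map_coe, Multiset.sum_coe, ← Fin.sum_univ_fun_getElem]
    exact Finset.sum_congr rfl fun i _ => by rw [hbg]; rfl
  have hD : DD GG m b ∈ Submodule.span ℤ (SS GG '' {mu | IsPart mu}) := by
    apply Submodule.subset_span
    refine ⟨b, hpart, ?_⟩
    rw [← DD_eq_SS GG GG_zero hpart m]
    by_contra hlt
    push Not at hlt
    have := (conjP_lt hpart _ _).1 hlt
    rw [hbz m le_rfl] at this
    omega
  have hexp : DD GG m b = ∏ i : Fin m, cvar (b (i : ℕ) : ℤ) +
      ∑ σ ∈ (Finset.univ : Finset (Equiv.Perm (Fin m))).erase 1, Equiv.Perm.sign σ •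
        ∏ i : Fin m, cvar ((b (σ i : ℕ) : ℤ) - (σ i : ℕ) + (i : ℕ)) := by
    unfold DD
    rw [Matrix.det_apply, ← Finset.add_sum_erase _ _ (Finset.mem_univ 1)]
    simp [cz_GG]
  rw [hprod, ← sub_eq_of_eq_add hexp]
  refine Submodule.sub_mem _ hD (Submodule.sum_mem _ fun σ hσ => ?_)
  have hσ' : σ ≠ 1 := Finset.ne_of_mem_erase hσ
  rw [Units.smul_def]
  refine Submodule.smul_mem _ _ ?_
  by_cases hneg : ∃ i : Fin m, (b (σ i : ℕ) : ℤ) - (σ i : ℕ) + (i : ℕ) < 0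
  · obtain ⟨i, hi⟩ := hneg
    have h0 : ∏ i : Fin m, cvar ((b (σ i : ℕ) : ℤ) - (σ i : ℕ) + (i : ℕ)) = 0 :=
      Finset.prod_eq_zero (Finset.mem_univ i) (by rw [cvar, if_pos hi])
    rw [h0]
    exact Submodule.zero_mem _
  · push Not at hneg
    choose e he using fun i => Int.eq_ofNat_of_zero_le (hneg i)
    have hs' := ih ((Finset.univ.val.map e).sum ^ 2 - ((Finset.univ.val.map e).map
      (fun d => d ^ 2)).sum) ?_ (Finset.univ.val.map e) rfl
    · rw [Multiset.map_map] at hs'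
      convert hs' using 1
      refine Finset.prod_congr rfl fun i _ => ?_
      rw [he]; rfl
    · have e1 : (Finset.univ.val.map e).sum = s.sum := by
        rw [hsum]
        change ∑ i, e i = _
        zify
        have h2 : ∑ i : Fin m, (b (σ i : ℕ) : ℤ) = ∑ i : Fin m, (b (i : ℕ) : ℤ) :=
          Equiv.sum_comp σ (fun i : Fin m => (b (i : ℕ) : ℤ))
        have h3 : ∑ i : Fin m, ((σ i : ℕ) : ℤ) = ∑ i : Fin m, ((i : ℕ) : ℤ) :=
          Equiv.sum_comp σ (fun i : Fin m => ((i : ℕ) : ℤ))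
        rw [← h2, Finset.sum_congr rfl fun i _ => (he i).symm, Finset.sum_add_distrib,
          Finset.sum_sub_distrib, h3]
        ring
      have e2 : (s.map (fun d => d ^ 2)).sum <
          ((Finset.univ.val.map e).map (fun d => d ^ 2)).sum := by
        rw [hsq, Multiset.map_map]
        change _ < ∑ i, (e i) ^ 2
        zify
        have := rearr b hba σ hσ'
        simpa only [he, Int.ofNat_eq_natCast] using this
      have e3 := sq_le_sq_sum (Finset.univ.val.map e)
      rw [← hs]
      rw [e1] at e3 ⊢
      omega

theorem span_all (f : MvPolynomial ℕ ℤ) : f ∈ Submodule.span ℤ (SS GG '' {mu | IsPart mu}) := by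
  have hX : ∀ d : ℕ, cvar ((d + 1 : ℕ) : ℤ) = X d := by
    intro d
    unfold cvar
    rw [if_neg (by omega), if_neg (by omega)]
    congr 1
  rw [MvPolynomial.as_sum f]
  refine Submodule.sum_mem _ fun d _ => ?_
  rw [← mul_one (coeff d f), ← smul_eq_mul, ← MvPolynomial.smul_monomial]
  refine Submodule.smul_mem _ _ ?_
  have := cprod_mem _ (d.toMultiset.map (fun i => i + 1)) rfl
  rw [Multiset.map_map] at this
  convert this using 1
  rw [MvPolynomial.monomial_eq, map_one, one_mul]
  simp only [Function.comp_def, hX]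
  rw [Finsupp.toMultiset_map, Finsupp.prod_toMultiset,
    Finsupp.prod_mapDomain_index (fun _ => pow_zero _) (fun _ _ _ => pow_add _ _ _)]

theorem kernel_of_supersymmetrization (n p : ℕ) (hn : 1 ≤ n) (hp : 1 ≤ p) :
    ∀ f : MvPolynomial ℕ ℤ,
      aeval (fun d : ℕ => cpoly n p (d + 1)) f = 0 ↔
        f ∈ Submodule.span ℤ
          { S : MvPolynomial ℕ ℤ | ∃ lam : ℕ → ℕ, Antitone lam ∧
              (∃ N, ∀ k, N ≤ k → lam k = 0) ∧
              (∀ l, l < p + 1 → n + 1 ≤ lam l) ∧ S = SchurC lam } := by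
  have hmap : ∀ mu, aeval (fun d : ℕ => cpoly n p (d + 1)) (SS GG mu) =
      SS (PowerSeries.mk (fun d => cpoly n p d)) mu := by
    intro mu
    rw [← map_GG]
    exact (DD_map _ GG _ mu).symm
  have hback : ∀ f ∈ Submodule.span ℤ
          { S : MvPolynomial ℕ ℤ | ∃ lam : ℕ → ℕ, Antitone lam ∧
              (∃ N, ∀ k, N ≤ k → lam k = 0) ∧
              (∀ l, l < p + 1 → n + 1 ≤ lam l) ∧ S = SchurC lam },
      aeval (fun d : ℕ => cpoly n p (d + 1)) f = 0 := by
    intro f hf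
    induction hf using Submodule.span_induction with
    | mem x hx =>
      obtain ⟨lam, h1, h2, h3, rfl⟩ := hx
      have hl : IsPart lam := ⟨h1, h2⟩
      rw [SchurC_eq hl, hmap]
      unfold SS
      rw [conjP_conjP hl]
      refine DD_vanish _ _ _ n p (cpoly_gen n p) (PP_coeff_zero _) (coeff_PP_eq_zero _)
        (coeff_PP_eq_zero _) _ ?_ _ (h3 0 (by omega))
      intro k hk
      have := h3 p (by omega)
      have := (conjP_lt hl p k).2 (by omega)
      omega
    | zero => simp
    | add x y _ _ hx hy => rw [map_add, hx, hy, add_zero]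
    | smul a x _ hx => rw [map_smul, hx, smul_zero]
  intro f
  refine ⟨fun hf => ?_, hback f⟩
  have hall := span_all f
  have hsplit : SS GG '' {mu | IsPart mu} ⊆ (SS GG '' Hook n p) ∪ 
      { S : MvPolynomial ℕ ℤ | ∃ lam : ℕ → ℕ, Antitone lam ∧
              (∃ N, ∀ k, N ≤ k → lam k = 0) ∧
              (∀ l, l < p + 1 → n + 1 ≤ lam l) ∧ S = SchurC lam } := by
    rintro _ ⟨mu, hmu, rfl⟩
    have hmu : IsPart mu := hmu
    rcases le_or_gt (mu n) p with h | h
    · exact Or.inl ⟨mu, ⟨hmu, h⟩, rfl⟩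
    · right
      have hc := conjP_isPart hmu
      refine ⟨conjP mu, hc.1, hc.2, fun l hl => ?_, ?_⟩
      · exact (conjP_lt hmu n l).2 (by omega)
      · rw [SchurC_eq hc, conjP_conjP hmu]
  have h2 := Submodule.span_mono hsplit hall
  rw [Submodule.span_union, Submodule.mem_sup] at h2
  obtain ⟨g, hg, h, hh, rfl⟩ := h2
  rw [map_add, hback h hh, add_zero] at hf
  obtain ⟨l, hl, rfl⟩ := (Finsupp.mem_span_image_iff_linearCombination ℤ).1 hg
  obtain ⟨R, _, x, y, C, hC, hI⟩ := exists_indep n p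
  let φ : MvPolynomial (Fin n ⊕ Fin p) ℤ →+* R :=
    ((aeval (Sum.elim x y) : MvPolynomial (Fin n ⊕ Fin p) ℤ →ₐ[ℤ] R) :
      MvPolynomial (Fin n ⊕ Fin p) ℤ →+* R)
  have hφC : PowerSeries.map φ (PowerSeries.mk (fun d => cpoly n p d)) = C := by
    have := congrArg (PowerSeries.map φ) (cpoly_gen n p)
    rw [map_mul, PP_map, PP_map] at this
    have ex : (fun i : Fin n => φ (X (Sum.inl i))) = x := by funext i; simp [φ]
    have ey : (fun i : Fin p => φ (X (Sum.inr i))) = y := by funext i; simp [φ]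
    rw [ex, ey, ← hC] at this
    exact (PP_isUnit x).mul_right_cancel this
  have hz : ∑ mu ∈ l.support, l mu • SS C mu = 0 := by
    have := congrArg φ hf
    rw [Finsupp.linearCombination_apply, Finsupp.sum, map_sum, map_sum, map_zero] at this
    rw [← this]
    refine Finset.sum_congr rfl fun mu _ => ?_
    rw [map_zsmul, map_zsmul, hmap, ← hφC]
    congr 1
    exact DD_map φ _ _ mu
  have hl0 : l = 0 := by
    ext mu
    by_cases hm : mu ∈ l.support
    · exact hI l.support l (fun i hi => (Finsupp.mem_supported ℤ l).1 hl hi) hz mu hm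
    · simpa using hm
  rw [hl0, map_zero, zero_add]
  exact hh
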